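/- Let C = ⟨(b|0), (ℓ | fh+2f)⟩ be a Z_2Z_4-additive cyclic code with fhg = x^β-1, β odd, and dual code C⊥ = ⟨(b̄|0), (ℓ̄ | f̄h̄+2f̄)⟩ with f̄ḡh̄ = x^β-1. Then b̄ = (x^α - 1)/(gcd(b,ℓ))* in Z_2[x], where p* denotes the reciprocal polynomial. -/

import Mathlib

open Polynomial

/-- Reduction modulo 2, `Z₄[x] → Z₂[x]`. -/
noncomputable def red42 : Polynomial (ZMod 4) →+* Polynomial (ZMod 2) :=
  Polynomial.mapRingHom (ZMod.castHom (show 2 ∣ 4 by norm_num) (ZMod 2))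

/-- The polynomial `∑ uᵢ xⁱ` associated to a binary vector. -/
noncomputable def polyOf2 {α : ℕ} (u : Fin α → ZMod 2) : Polynomial (ZMod 2) :=
  ∑ i, C (u i) * X ^ (i : ℕ)

/-- The polynomial `∑ u'ⱼ xʲ` associated to a quaternary vector. -/
noncomputable def polyOf4 {β : ℕ} (u : Fin β → ZMod 4) : Polynomial (ZMod 4) :=
  ∑ j, C (u j) * X ^ (j : ℕ)

/-- Membership in the `Z₂Z₄`-additive cyclic code `C = ⟨(b|0), (ℓ|q)⟩`. -/
def memC {α β : ℕ} (b ℓ : Polynomial (ZMod 2)) (q : Polynomial (ZMod 4))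
    (z : (Fin α → ZMod 2) × (Fin β → ZMod 4)) : Prop :=
  ∃ lam mu : Polynomial (ZMod 4),
    (X ^ α - 1 : Polynomial (ZMod 2)) ∣
        polyOf2 z.1 - (red42 lam * b + red42 mu * ℓ) ∧
    (X ^ β - 1 : Polynomial (ZMod 4)) ∣ polyOf4 z.2 - mu * q

/-- The standard inner product on `Z₂^α × Z₄^β` with values in `Z₄`. -/
def innerZ2Z4 {α β : ℕ} (u v : (Fin α → ZMod 2) × (Fin β → ZMod 4)) : ZMod 4 :=
  2 * ∑ i, (((u.1 i).val : ZMod 4) * ((v.1 i).val : ZMod 4)) + ∑ j, u.2 j * v.2 j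


lemma dgb_red_surj : Function.Surjective red42 := by
  have : Function.Surjective (ZMod.castHom (show 2 ∣ 4 by norm_num) (ZMod 2)) :=
    ZMod.castHom_surjective _
  exact Polynomial.map_surjective _ this

lemma dgb_red_coeff (p : Polynomial (ZMod 4)) (n : ℕ) :
    (red42 p).coeff n = ZMod.castHom (show 2 ∣ 4 by norm_num) (ZMod 2) (p.coeff n) := by
  simp [red42, Polynomial.coeff_map]

lemma dgb_red_zero_of (p : Polynomial (ZMod 4)) (hp : 2 * p = 0) : red42 p = 0 := by
  ext n
  rw [dgb_red_coeff]
  have h1 : (2 * p).coeff n = 0 := by rw [hp]; simp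
  rw [show (2 : Polynomial (ZMod 4)) = C 2 from rfl, coeff_C_mul] at h1
  generalize p.coeff n = a at h1 ⊢
  rw [coeff_zero]
  revert a; decide

lemma dgb_two_red : red42 2 = 0 := by
  apply dgb_red_zero_of
  rw [show (2 : Polynomial (ZMod 4)) = C 2 from rfl, ← C_mul]
  rw [show (2 * 2 : ZMod 4) = 0 by decide, C_0]

lemma dgb_two_mul_of (p : Polynomial (ZMod 4)) (hp : red42 p = 0) : 2 * p = 0 := by
  ext n
  have h1 := dgb_red_coeff p n
  rw [hp, coeff_zero] at h1
  rw [show (2 : Polynomial (ZMod 4)) = C 2 from rfl, coeff_C_mul, coeff_zero]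
  generalize p.coeff n = a at h1 ⊢
  revert a; decide

lemma dgb_eq_two_mul (p : Polynomial (ZMod 4)) (hp : red42 p = 0) : ∃ t, p = 2 * t := by
  have : (C (2 : ZMod 4)) ∣ p := by
    rw [Polynomial.C_dvd_iff_dvd_coeff]
    intro n
    have h1 := dgb_red_coeff p n
    rw [hp, coeff_zero] at h1
    generalize p.coeff n = a at h1 ⊢
    have : ∀ a : ZMod 4, 0 = ZMod.castHom (show 2 ∣ 4 by norm_num) (ZMod 2) a →
      ∃ c, a = 2 * c := by decide
    exact this a h1
  exact this

lemma dgb_red_monic {p : Polynomial (ZMod 4)} (hp : p.Monic) : (red42 p).Monic :=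
  hp.map _

lemma dgb_coprime {β : ℕ} (hβ : Odd β) {f g h : Polynomial (ZMod 4)}
    (hfac : f * h * g = X ^ β - 1) : IsCoprime (red42 h) (red42 g) := by
  have hs : (X ^ β - 1 : Polynomial (ZMod 2)).Separable := by
    rw [Polynomial.X_pow_sub_one_separable_iff]
    intro h0
    rw [ZMod.natCast_eq_zero_iff] at h0
    rcases hβ with ⟨k, rfl⟩
    omega
  have h1 : red42 f * red42 h * red42 g = X ^ β - 1 := by
    rw [← map_mul, ← map_mul, hfac]; simp [red42]
  rw [← h1] at hs
  exact (hs.isCoprime).of_mul_left_right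

lemma dgb_annih {β : ℕ} (hβ : Odd β) {f g h : Polynomial (ZMod 4)} (hf : f.Monic)
    (hh : h.Monic)
    (hfac : f * h * g = X ^ β - 1) (mu : Polynomial (ZMod 4))
    (hmu : (X ^ β - 1 : Polynomial (ZMod 4)) ∣ mu * (f * h + 2 * f)) :
    red42 (h * g) ∣ red42 mu := by
  obtain ⟨k, hk⟩ := hmu
  have h1 : mu * (h + 2) = h * g * k := by
    apply hf.isRegular.left
    show f * _ = f * _
    rw [← hfac] at hk
    linear_combination hk
  have h2 : red42 h * (red42 g * red42 k - red42 mu) = 0 := by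
    have := congrArg red42 h1
    simp only [map_mul, map_add, dgb_two_red] at this
    linear_combination -this
  have h3 : red42 (g * k - mu) = 0 := by
    rw [map_sub, map_mul]
    exact (mul_eq_zero.1 h2).resolve_left (dgb_red_monic hh).ne_zero
  obtain ⟨t, ht⟩ := dgb_eq_two_mul _ h3
  have h4 : red42 (mu - h * t) = 0 := by
    apply dgb_red_zero_of
    linear_combination h1 + h * ht
  rw [map_mul]
  apply (dgb_coprime hβ hfac).mul_dvd
  · rw [map_sub, map_mul] at h4
    exact ⟨red42 t, sub_eq_zero.1 h4⟩
  · rw [map_sub, map_mul] at h3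
    exact ⟨red42 k, (sub_eq_zero.1 h3).symm⟩

lemma dgb_monic {R : Type*} [CommRing R] {n : ℕ} (hn : 0 < n) :
    (X ^ n - 1 : Polynomial R).Monic := by
  have := monic_X_pow_sub_C (1 : R) hn.ne'
  simpa using this

lemma dgb_vec {R : Type*} [CommRing R] [Nontrivial R] {n : ℕ} (hn : 0 < n) (p : Polynomial R) :
    (∑ i : Fin n, C ((p %ₘ (X ^ n - 1)).coeff i) * X ^ (i : ℕ)) = p %ₘ (X ^ n - 1) := by
  have hd : (p %ₘ (X ^ n - 1)).degree < n := by
    have := degree_modByMonic_lt p (dgb_monic (R := R) hn)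
    have h2 : (X ^ n - 1 : Polynomial R).degree = n := by
      simpa using degree_X_pow_sub_C hn (1 : R)
    rwa [h2] at this
  rw [Fin.sum_univ_eq_sum_range (fun i => C ((p %ₘ (X ^ n - 1)).coeff i) * X ^ i) n]
  have hd' : p %ₘ (X ^ n - 1) = 0 ∨ (p %ₘ (X ^ n - 1)).natDegree < n := by
    by_cases h0 : p %ₘ (X ^ n - 1) = 0
    · exact Or.inl h0
    · right; exact (natDegree_lt_iff_degree_lt h0).2 hd
  rcases hd' with h0 | h0
  · rw [h0]; simp
  · exact ((p %ₘ (X ^ n - 1)).as_sum_range_C_mul_X_pow' h0).symm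

/-- Cyclic bilinear form. -/
noncomputable def dgbB (n : ℕ) : Polynomial (ZMod 2) →ₗ[ZMod 2] Polynomial (ZMod 2) →ₗ[ZMod 2] ZMod 2 :=
  ∑ i : Fin n, (LinearMap.mul (ZMod 2) (ZMod 2)).compl₁₂
    ((lcoeff (ZMod 2) i).comp (modByMonicHom (X ^ n - 1)))
    ((lcoeff (ZMod 2) i).comp (modByMonicHom (X ^ n - 1)))

lemma dgbB_apply (n : ℕ) (p q : Polynomial (ZMod 2)) :
    dgbB n p q = ∑ i : Fin n, (p %ₘ (X ^ n - 1)).coeff i * (q %ₘ (X ^ n - 1)).coeff i := by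
  simp [dgbB, LinearMap.sum_apply]

lemma dgbB_congr {n : ℕ} (hn : 0 < n) {p p' q q' : Polynomial (ZMod 2)}
    (hp : (X ^ n - 1) ∣ p - p') (hq : (X ^ n - 1) ∣ q - q') :
    dgbB n p q = dgbB n p' q' := by
  have hm := dgb_monic (R := ZMod 2) hn
  have h1 : p %ₘ (X ^ n - 1) = p' %ₘ (X ^ n - 1) := by
    rw [← sub_eq_zero, ← sub_modByMonic]
    exact (modByMonic_eq_zero_iff_dvd hm).2 hp
  have h2 : q %ₘ (X ^ n - 1) = q' %ₘ (X ^ n - 1) := by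
    rw [← sub_eq_zero, ← sub_modByMonic]
    exact (modByMonic_eq_zero_iff_dvd hm).2 hq
  rw [dgbB_apply, dgbB_apply, h1, h2]

lemma dgb_self_mod {n : ℕ} (hn : 0 < n) {p : Polynomial (ZMod 2)} (hp : p.degree < n) :
    p %ₘ (X ^ n - 1) = p := by
  rw [modByMonic_eq_self_iff (dgb_monic hn)]
  have h2 : (X ^ n - 1 : Polynomial (ZMod 2)).degree = n := by
    simpa using degree_X_pow_sub_C hn (1 : ZMod 2)
  rwa [h2]

lemma dgb_polyOf2_deg {n : ℕ} (u : Fin n → ZMod 2) : (polyOf2 u).degree < n := by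
  unfold polyOf2
  rw [← mem_degreeLT]
  apply Submodule.sum_mem
  intro i _
  rw [mem_degreeLT]
  exact lt_of_le_of_lt (degree_C_mul_X_pow_le _ _) (by exact_mod_cast i.2)

lemma dgb_polyOf2_coeff {n : ℕ} (u : Fin n → ZMod 2) (i : Fin n) :
    (polyOf2 u).coeff i = u i := by
  unfold polyOf2
  rw [finsetSum_coeff]
  simp [coeff_X_pow, Fin.val_inj]

lemma dgbB_polyOf {n : ℕ} (hn : 0 < n) (u v : Fin n → ZMod 2) :
    dgbB n (polyOf2 u) (polyOf2 v) = ∑ i, u i * v i := by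
  rw [dgbB_apply, dgb_self_mod hn (dgb_polyOf2_deg u), dgb_self_mod hn (dgb_polyOf2_deg v)]
  simp only [dgb_polyOf2_coeff]

lemma dgb_X_pow_mod {n : ℕ} (i : ℕ) :
    (X ^ n - 1 : Polynomial (ZMod 2)) ∣ X ^ i - X ^ (i % n) := by
  have : (X ^ i : Polynomial (ZMod 2)) - X ^ (i % n) = X ^ (i % n) * ((X ^ n) ^ (i / n) - 1 ^ (i / n)) := by
    conv_lhs => rw [← Nat.mod_add_div i n]
    simp only [Nat.add_mul_mod_self_left, Nat.mod_mod]
    ring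
  rw [this]
  exact Dvd.dvd.mul_left (sub_dvd_pow_sub_pow _ _ _) _

lemma dgbB_X {n : ℕ} (hn : 0 < n) (i j : ℕ) :
    dgbB n (X ^ i) (X ^ j) = if i ≡ j [MOD n] then 1 else 0 := by
  rw [dgbB_congr hn (dgb_X_pow_mod i) (dgb_X_pow_mod j), dgbB_apply,
    dgb_self_mod hn, dgb_self_mod hn]
  · simp only [coeff_X_pow]
    rw [Fin.sum_univ_eq_sum_range (fun x => (if x = i % n then (1 : ZMod 2) else 0) * (if x = j % n then (1 : ZMod 2) else 0)) n]
    by_cases hij : i % n = j % n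
    · simp [Nat.mod_lt _ hn, Nat.ModEq, hij]
    · simp [Nat.mod_lt _ hn, Nat.ModEq, hij, Ne.symm hij]
  · rw [degree_X_pow]; exact_mod_cast Nat.mod_lt _ hn
  · rw [degree_X_pow]; exact_mod_cast Nat.mod_lt _ hn

lemma dgb_ind {P : Polynomial (ZMod 2) → Prop} (h0 : P 0) (ha : ∀ p q, P p → P q → P (p + q))
    (hX : ∀ i, P (X ^ i)) (p : Polynomial (ZMod 2)) : P p := by
  induction p using Polynomial.induction_on' with
  | add p q hp hq => exact ha p q hp hq
  | monomial n a =>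
    rw [← C_mul_X_pow_eq_monomial]
    have : a = 0 ∨ a = 1 := by revert a; decide
    rcases this with rfl | rfl
    · simpa using h0
    · simpa using hX n

lemma dgbB_shift {n : ℕ} (hn : 0 < n) (k : ℕ) (p q : Polynomial (ZMod 2)) :
    dgbB n (X ^ k * p) (X ^ k * q) = dgbB n p q := by
  induction p using dgb_ind with
  | h0 => simp
  | ha p p' h1 h2 => simp only [mul_add, map_add, LinearMap.add_apply, h1, h2]
  | hX i =>
    induction q using dgb_ind with
    | h0 => simp
    | ha p p' h1 h2 => simp only [mul_add, map_add, h1, h2]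
    | hX j =>
      rw [← pow_add, ← pow_add, dgbB_X hn, dgbB_X hn]
      simp only [Nat.ModEq.add_iff_left (Nat.ModEq.refl k)]

lemma dgbB_adj {n : ℕ} (hn : 0 < n) (r p q : Polynomial (ZMod 2)) :
    dgbB n (r * p) (X ^ r.natDegree * q) = dgbB n p (r.reverse * q) := by
  have key : ∀ N : ℕ, ∀ t : Polynomial (ZMod 2), t.natDegree ≤ N →
      dgbB n (t * p) (X ^ N * q) = dgbB n p (reflect N t * q) := by
    intro N t ht
    refine Polynomial.induction_with_natDegree_le
      (fun t => dgbB n (t * p) (X ^ N * q) = dgbB n p (reflect N t * q)) N ?_ ?_ ?_ t ht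
    · simp
    · intro i a _ hi
      rw [reflect_C_mul_X_pow, revAt_le hi, mul_assoc, mul_assoc, ← smul_eq_C_mul,
        ← smul_eq_C_mul, map_smul, map_smul, LinearMap.smul_apply]
      congr 1
      conv_lhs => rw [← Nat.add_sub_cancel' hi, pow_add, mul_assoc]
      exact dgbB_shift hn i _ _
    · intro t t' _ _ h1 h2
      simp only [add_mul, map_add, LinearMap.add_apply, reflect_add, h1, h2]
  exact key _ r le_rfl

lemma dgbB_nondeg {n : ℕ} (hn : 0 < n) (w : Polynomial (ZMod 2)) (hw : ∀ s, dgbB n s w = 0) :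
    (X ^ n - 1) ∣ w := by
  rw [← modByMonic_eq_zero_iff_dvd (dgb_monic hn)]
  rw [← dgb_vec hn]
  apply Finset.sum_eq_zero
  intro i _
  have := hw (X ^ (i : ℕ))
  rw [dgbB_apply, dgb_self_mod hn (by rw [degree_X_pow]; exact_mod_cast i.2)] at this
  simp only [coeff_X_pow, ite_mul, one_mul, zero_mul, Fin.val_inj] at this
  simp at this
  rw [this]; simp

/-- The doubling embedding. -/
def dgbPsi : ZMod 2 →+ ZMod 4 where
  toFun a := 2 * (a.val : ZMod 4)
  map_zero' := by decide
  map_add' := by decide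

lemma dgb_inner {α β : ℕ} (hα : 0 < α) (u v : (Fin α → ZMod 2) × (Fin β → ZMod 4))
    (hv : v.2 = 0) : innerZ2Z4 u v = 0 ↔ dgbB α (polyOf2 u.1) (polyOf2 v.1) = 0 := by
  have h1 : innerZ2Z4 u v = dgbPsi (dgbB α (polyOf2 u.1) (polyOf2 v.1)) := by
    rw [dgbB_polyOf hα, map_sum]
    unfold innerZ2Z4
    rw [hv, Finset.mul_sum]
    simp only [Pi.zero_apply, mul_zero, Finset.sum_const_zero, add_zero]
    apply Finset.sum_congr rfl
    intro i _
    generalize u.1 i = a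
    generalize v.1 i = c
    show 2 * ((a.val : ZMod 4) * (c.val : ZMod 4)) = 2 * ((a * c).val : ZMod 4)
    revert a c; decide
  rw [h1]
  generalize dgbB α (polyOf2 u.1) (polyOf2 v.1) = a
  show 2 * (a.val : ZMod 4) = 0 ↔ a = 0
  revert a; decide

lemma dgb_mod_dvd {R : Type*} [CommRing R] {n : ℕ} (p : Polynomial R) :
    (X ^ n - 1) ∣ p %ₘ (X ^ n - 1) - p := by
  have := modByMonic_add_div p (X ^ n - 1)
  exact ⟨-(p /ₘ (X ^ n - 1)), by linear_combination this⟩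

/-- Let `C = ⟨(b|0), (ℓ|fh+2f)⟩` with dual `C⊥ = ⟨(b̄|0), (ℓ̄|f̄h̄+2f̄)⟩`, both
in standard form. Then `b̄ = (x^α-1)/(gcd(b,ℓ))*` in `Z₂[x]`, where `p*`
denotes the reciprocal polynomial (stated multiplicatively:
`b̄ · (gcd(b,ℓ))* = x^α - 1`). -/
theorem dual_generator_bbar (α β : ℕ) (hα : 0 < α) (hβ : Odd β)
    (f g h : Polynomial (ZMod 4)) (hf : f.Monic) (hg : g.Monic) (hh : h.Monic)
    (hfac : f * h * g = X ^ β - 1)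
    (b ℓ : Polynomial (ZMod 2)) (hb : b ∣ X ^ α - 1) (hℓ : ℓ.degree < b.degree)
    (hdvd : b ∣ red42 (h * g) * ℓ)
    (fbar gbar hbar : Polynomial (ZMod 4))
    (hfbar : fbar.Monic) (hgbar : gbar.Monic) (hhbar : hbar.Monic)
    (hfacbar : fbar * hbar * gbar = X ^ β - 1)
    (bbar ℓbar : Polynomial (ZMod 2)) (hbbar : bbar ∣ X ^ α - 1)
    (hℓbar : ℓbar.degree < bbar.degree)
    (hdvdbar : bbar ∣ red42 (hbar * gbar) * ℓbar)
    (hdual : ∀ v : (Fin α → ZMod 2) × (Fin β → ZMod 4),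
      (∀ u : (Fin α → ZMod 2) × (Fin β → ZMod 4),
        memC b ℓ (f * h + 2 * f) u → innerZ2Z4 u v = 0) ↔
      memC bbar ℓbar (fbar * hbar + 2 * fbar) v) :
    bbar * (EuclideanDomain.gcd b ℓ).reverse = X ^ α - 1 := by
  have hβ0 : 0 < β := hβ.pos
  haveI : Nontrivial (ZMod 4) := ⟨0, 1, by decide⟩
  have hm := dgb_monic (R := ZMod 2) hα
  set d := EuclideanDomain.gcd b ℓ with hd
  have hdb : d ∣ b := EuclideanDomain.gcd_dvd_left _ _
  have hdl : d ∣ ℓ := EuclideanDomain.gcd_dvd_right _ _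
  obtain ⟨e, he⟩ : d ∣ X ^ α - 1 := hdb.trans hb
  have hrev : d.reverse * e.reverse = X ^ α - 1 := by
    rw [← reverse_mul_of_domain, ← he]
    have h1 : (X ^ α - 1 : Polynomial (ZMod 2)).natDegree = α := by
      simpa using natDegree_X_pow_sub_C (n := α) (r := (1 : ZMod 2))
    have h2 : (X ^ α - 1 : Polynomial (ZMod 2)) = C 1 * X ^ α + C 1 * X ^ 0 := by
      simp [CharTwo.sub_eq_add]
    unfold reverse
    rw [h1, h2, reflect_add, reflect_C_mul_X_pow, reflect_C_mul_X_pow, revAt_le le_rfl,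
      revAt_le (Nat.zero_le _)]
    simp [add_comm]
  have hvec : ∀ p : Polynomial (ZMod 2), ∃ v : Fin α → ZMod 2, polyOf2 v = p %ₘ (X ^ α - 1) :=
    fun p => ⟨_, dgb_vec hα p⟩
  have hvec4 : ∀ p : Polynomial (ZMod 4), ∃ v : Fin β → ZMod 4, polyOf4 v = p %ₘ (X ^ β - 1) :=
    fun p => ⟨_, dgb_vec hβ0 p⟩
  have h40 : polyOf4 (0 : Fin β → ZMod 4) = 0 := by simp [polyOf4]
  -- first divisibility
  have hA : bbar ∣ e.reverse := by
    obtain ⟨v, hv⟩ := hvec e.reverse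
    have hmem := (hdual (v, 0)).1 (by
      rintro u ⟨lam, mu, h1, -⟩
      rw [dgb_inner hα _ _ rfl]
      obtain ⟨s, hs⟩ : d ∣ red42 lam * b + red42 mu * ℓ :=
        dvd_add (hdb.mul_left _) (hdl.mul_left _)
      rw [hs] at h1
      have h2 : (X ^ α - 1) ∣ polyOf2 v - e.reverse := by
        rw [hv]; exact dgb_mod_dvd _
      show dgbB α (polyOf2 u.1) (polyOf2 v) = 0
      rw [dgbB_congr hα h1 h2]
      have h3 := dgbB_adj hα e (d * s) 1
      rw [mul_one, mul_one] at h3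
      rw [← h3]
      rw [dgbB_congr hα (p' := 0) (q' := X ^ e.natDegree) _ (by simp)]
      · simp
      · rw [he]; exact ⟨s, by ring⟩)
    obtain ⟨lam, mu, h1, h2⟩ := hmem
    simp only [h40, zero_sub, dvd_neg] at h2
    have h3 := dgb_annih hβ hfbar hhbar hfacbar mu h2
    have h4 : bbar ∣ red42 mu * ℓbar := hdvdbar.trans (mul_dvd_mul_right h3 _)
    have h5 : bbar ∣ polyOf2 v := by
      have := hbbar.trans h1
      exact (dvd_iff_dvd_of_dvd_sub this).2 (dvd_add (dvd_mul_left _ _) h4)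
    rw [hv] at h5
    exact (dvd_iff_dvd_of_dvd_sub (hbbar.trans (dgb_mod_dvd _))).1 h5
  have hd0 : d.reverse ≠ 0 := by
    intro h0
    rw [h0, zero_mul] at hrev
    exact hm.ne_zero hrev.symm
  have hB : e.reverse ∣ bbar := by
    obtain ⟨v, hv⟩ := hvec bbar
    have h2 : (X ^ α - 1) ∣ polyOf2 v - bbar := by
      rw [hv]; exact dgb_mod_dvd _
    have hmem := (hdual (v, 0)).2 ⟨1, 0, by simpa using h2, by simp [h40]⟩
    have hor : ∀ s, dgbB α (d * s) bbar = 0 := by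
      intro s
      obtain ⟨lam, hlam⟩ := dgb_red_surj (EuclideanDomain.gcdA b ℓ * s)
      obtain ⟨mu, hmu⟩ := dgb_red_surj (EuclideanDomain.gcdB b ℓ * s)
      have hg := EuclideanDomain.gcd_eq_gcd_ab b ℓ
      have hds : d * s = red42 lam * b + red42 mu * ℓ := by
        rw [hlam, hmu, hd, hg]; ring
      obtain ⟨u, hu⟩ := hvec (d * s)
      obtain ⟨u', hu'⟩ := hvec4 (mu * (f * h + 2 * f))
      have h3 : (X ^ α - 1) ∣ polyOf2 u - d * s := by
        rw [hu]; exact dgb_mod_dvd _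
      have := hmem (u, u') ⟨lam, mu, by rw [← hds]; exact h3, by
        show _ ∣ polyOf4 u' - _
        rw [hu']; exact dgb_mod_dvd _⟩
      rw [dgb_inner hα _ _ rfl] at this
      rw [← dgbB_congr hα h3 h2]
      exact this
    have h5 : (X ^ α - 1) ∣ d.reverse * bbar := by
      apply dgbB_nondeg hα
      intro s
      rw [← dgbB_adj hα]
      have h6 : (X ^ α - 1 : Polynomial (ZMod 2)) ∣ X ^ (α * d.natDegree) - 1 := by
        have := dgb_X_pow_mod (n := α) (α * d.natDegree)
        simpa using this
      rw [← dgbB_shift hα ((α - 1) * d.natDegree)]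
      have h7 : X ^ ((α - 1) * d.natDegree) * (X ^ d.natDegree * bbar)
          = X ^ (α * d.natDegree) * bbar := by
        rw [← mul_assoc, ← pow_add]
        congr 2
        obtain ⟨a, rfl⟩ : ∃ a, α = a + 1 := ⟨α - 1, by omega⟩
        simp; ring
      rw [h7, dgbB_congr hα (p' := d * (X ^ ((α - 1) * d.natDegree) * s)) (q' := bbar)]
      · exact hor _
      · exact ⟨0, by ring⟩
      · obtain ⟨c, hc⟩ := h6
        exact ⟨c * bbar, by linear_combination bbar * hc⟩
    rw [← hrev] at h5
    exact (mul_dvd_mul_iff_left hd0).1 h5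
  have hassoc : Associated bbar e.reverse := associated_of_dvd_dvd hA hB
  have heq : bbar = e.reverse := by
    obtain ⟨w, hw⟩ := hassoc
    obtain ⟨r, hr, hr'⟩ := Polynomial.isUnit_iff.1 w.isUnit
    have : ∀ r : ZMod 2, IsUnit r → r = 1 := by decide
    rw [← hr', this r hr] at hw
    simpa using hw
  rw [heq, mul_comm]
  exact hrev
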